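/- arXiv:2511.03358 — 3 statements merged into one kernel-verified Lean document; each statement's English description precedes it below -/
import Mathlib

section
/- Fix ν ∈ [0,1], σa > 0 and σm > 0, and suppose a₀ > 0, θ₀ > 0 are such that F'_μ(ν, σa, σm, a₀, θ₀)[0] = 0. Then the partial derivative of (a, θ) ↦ F'_μ(ν, σa, σm, a, θ)[0] with respect to θ at (a₀, θ₀) is strictly positive, and likewise its partial derivative with respect to a at (a₀, θ₀) is strictly positive. -/
open MeasureTheory Real Set Filter

/-- Unnormalised stationary density ρ0[μ](x) of the McKean–Vlasov SDE
`dX = (aX − X³ − θ(X − m₁))dt + σa dB¹ + σm X ∘_ν dB²`. -/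
noncomputable def rho0 (ν σa σm a θ μ x : ℝ) : ℝ :=
  Real.exp (((a - θ - ν * σm ^ 2 + σa ^ 2 / σm ^ 2) / σm ^ 2) *
      Real.log (1 + (σm ^ 2 / σa ^ 2) * x ^ 2) +
    (2 * θ * μ / (σa * σm)) * Real.arctan (σm * x / σa) - x ^ 2 / σm ^ 2)

/-- Normalisation constant Z[μ] = ∫ ρ0[μ]. -/
noncomputable def Z (ν σa σm a θ μ : ℝ) : ℝ := ∫ x : ℝ, rho0 ν σa σm a θ μ x

/-- Self-consistency function F(ν,σa,σm,a,θ)[μ] = (∫ (x−μ)·ρ0[μ]) / Z[μ]. -/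
noncomputable def F (ν σa σm a θ μ : ℝ) : ℝ :=
  (∫ x : ℝ, (x - μ) * rho0 ν σa σm a θ μ x) / Z ν σa σm a θ μ

/-- F'_μ[0] : the derivative at μ = 0 of μ ↦ F(ν,σa,σm,a,θ)[μ]. -/
noncomputable def Fmu' (ν σa σm a θ : ℝ) : ℝ := deriv (fun μ => F ν σa σm a θ μ) 0

/-!
In the variable `y = σm x / σa`, the density `ρ0[0]` becomes `(1 + y²) ^ c * exp (-κ y²)` with
`κ = σa² / σm⁴` and `c = (a - θ) / σm² - ν + κ`, while the factor depending on `μ` is an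
exponential tilt by `arctan y`. Differentiating a tilted mean gives a covariance, hence
`F'_μ[0] = 2 τ φ(c) - 1`, where `τ = θ / σm²` and `φ(c)` is the mean of `y arctan y`.

Raising `c` is an exponential tilt by `log (1 + y²)`, so `φ'` is the covariance of two functions
increasing in `|y|` and is positive by Chebyshev's inequality; this is the claim for `a`. At a root
`τ = 1 / (2 φ)`, and positivity of the `θ`-derivative `2 (φ - τ φ') / σm²` amounts to
`φ' < 2 φ²`. Integration by parts gives `1 / φ = 2 κ (1 + ψ) - 2 c - 2`, where `ψ(c)` is the mean
of `y²` under the density biased by `y arctan y`. Thus `φ' / φ² = 2 - 2 κ ψ'`, and `ψ' > 0`, again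
by Chebyshev's inequality.
-/

open scoped Topology

section WeightedMean

variable {X : Type*} {ω f g h : X → ℝ} {t : ℝ}

/-- The exponential family generated by the density `ω` and the statistic `h`. -/
noncomputable def expTilt (ω h : X → ℝ) (t : ℝ) (x : X) : ℝ := ω x * exp (t * h x)

theorem expTilt_mul_left (f ω h : X → ℝ) (t : ℝ) :
    expTilt (fun x => f x * ω x) h t = fun x => f x * expTilt ω h t x :=
  funext fun _ => mul_assoc _ _ _

variable [MeasurableSpace X] {μ : Measure X}

/-- The mean of `f` with respect to the unnormalised density `ω`; it is `0` when `ω` has integral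
zero or is not integrable. -/
noncomputable def weightedMean (μ : Measure X) (ω f : X → ℝ) : ℝ :=
  (∫ x, f x * ω x ∂μ) / ∫ x, ω x ∂μ

theorem weightedMean_const_mul (μ : Measure X) (ω f : X → ℝ) (k : ℝ) :
    weightedMean μ ω (fun x => k * f x) = k * weightedMean μ ω f := by
  simp only [weightedMean, mul_assoc, integral_const_mul, mul_div_assoc]

theorem weightedMean_sub_const (hω : Integrable ω μ) (hf : Integrable (fun x => f x * ω x) μ)
    (h0 : ∫ x, ω x ∂μ ≠ 0) (k : ℝ) :
    weightedMean μ ω (fun x => f x - k) = weightedMean μ ω f - k := by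
  simp only [weightedMean, sub_mul]
  rw [integral_sub hf (hω.const_mul k), integral_const_mul, sub_div, mul_div_cancel_right₀ _ h0]

theorem weightedMean_comp_mul_left (ω f : ℝ → ℝ) {r : ℝ} (hr : r ≠ 0) :
    weightedMean volume (fun x => ω (r * x)) (fun x => f (r * x)) = weightedMean volume ω f := by
  have hr' : |r⁻¹| ≠ 0 := by simpa using hr
  rw [weightedMean, Measure.integral_comp_mul_left (fun x => f x * ω x),
    Measure.integral_comp_mul_left ω, smul_eq_mul, smul_eq_mul, mul_div_mul_left _ _ hr',
    weightedMean]

theorem integral_eq_zero_of_odd {u : ℝ → ℝ} (hu : u.Odd) : ∫ x, u x = 0 := by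
  have h := integral_neg_eq_self u volume
  simp only [hu.eq, integral_neg] at h
  linarith

theorem weightedMean_eq_zero_of_even_of_odd {ω f : ℝ → ℝ} (hω : ω.Even) (hf : f.Odd) :
    weightedMean volume ω f = 0 := by
  have h : ∫ x, f x * ω x = 0 := integral_eq_zero_of_odd (hf.mul_even hω)
  rw [weightedMean, h, zero_div]

theorem abs_mul_exp_mul_le {δ s t y : ℝ} (hδ : 0 < δ) (hs : |s - t| ≤ δ) :
    |y| * exp (s * y) ≤ δ⁻¹ * (exp ((t + 2 * δ) * y) + exp ((t - 2 * δ) * y)) := by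
  have hy : |y| ≤ δ⁻¹ * exp (δ * |y|) := by
    rw [inv_mul_eq_div, le_div_iff₀ hδ]
    linarith [add_one_le_exp (δ * |y|)]
  have hsy : s * y ≤ t * y + δ * |y| := by
    have : (s - t) * y ≤ δ * |y| :=
      (le_abs_self _).trans (by rw [abs_mul]; gcongr)
    linarith
  have hexp : exp (2 * δ * |y|) ≤ exp (2 * δ * y) + exp (-(2 * δ * y)) := by
    simpa [abs_mul, abs_of_pos hδ] using exp_abs_le (2 * δ * y)
  calc |y| * exp (s * y)
      ≤ δ⁻¹ * exp (δ * |y|) * exp (t * y + δ * |y|) := by gcongr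
    _ = δ⁻¹ * (exp (t * y) * exp (2 * δ * |y|)) := by
        rw [mul_assoc, ← exp_add, ← exp_add]; ring_nf
    _ ≤ δ⁻¹ * (exp (t * y) * (exp (2 * δ * y) + exp (-(2 * δ * y)))) := by gcongr
    _ = _ := by rw [mul_add, ← exp_add, ← exp_add]; ring_nf

theorem hasDerivAt_integral_expTilt (hh : AEMeasurable h μ)
    (hω : ∀ᶠ s in 𝓝 t, Integrable (expTilt ω h s) μ) :
    Integrable (fun x => h x * expTilt ω h t x) μ ∧
      HasDerivAt (fun s => ∫ x, expTilt ω h s x ∂μ) (∫ x, h x * expTilt ω h t x ∂μ) t := by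
  obtain ⟨ε, hε, hball⟩ := Metric.eventually_nhds_iff.1 hω
  have hδ : 0 < ε / 3 := by positivity
  have hadd := hball (y := t + 2 * (ε / 3)) (by
    rw [dist_self_add_left, norm_of_nonneg (by positivity)]; linarith)
  have hsub := hball (y := t - 2 * (ε / 3)) (by
    rw [dist_self_sub_left, norm_of_nonneg (by positivity)]; linarith)
  have hbound : Integrable (fun x => |ω x| * ((ε / 3)⁻¹ *
      (exp ((t + 2 * (ε / 3)) * h x) + exp ((t - 2 * (ε / 3)) * h x)))) μ := by
    refine ((hadd.abs.add hsub.abs).const_mul (ε / 3)⁻¹).congr (ae_of_all _ fun x => ?_)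
    simp only [expTilt, Pi.add_apply, abs_mul, abs_exp]
    ring
  refine hasDerivAt_integral_of_dominated_loc_of_deriv_le (Metric.ball_mem_nhds t hδ)
    (F' := fun s x => h x * expTilt ω h s x)
    (hω.mono fun _ hs => hs.aestronglyMeasurable) hω.self_of_nhds
    (hh.aestronglyMeasurable.mul hω.self_of_nhds.aestronglyMeasurable)
    (ae_of_all _ fun x s hs => ?_) hbound (ae_of_all _ fun x s _ => ?_)
  · calc ‖h x * expTilt ω h s x‖ = |ω x| * (|h x| * exp (s * h x)) := by
          rw [expTilt, norm_eq_abs, abs_mul, abs_mul, abs_exp]; ring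
      _ ≤ _ := mul_le_mul_of_nonneg_left
          (abs_mul_exp_mul_le hδ (Metric.mem_ball.1 hs).le) (abs_nonneg _)
  · exact ((hasDerivAt_mul_const (h x)).exp.const_mul (ω x)).congr_deriv (by rw [expTilt]; ring)

theorem hasDerivAt_weightedMean_expTilt (hh : AEMeasurable h μ)
    (hω : ∀ᶠ s in 𝓝 t, Integrable (expTilt ω h s) μ)
    (hf : ∀ᶠ s in 𝓝 t, Integrable (fun x => f x * expTilt ω h s x) μ)
    (h0 : ∫ x, expTilt ω h t x ∂μ ≠ 0) :
    HasDerivAt (fun s => weightedMean μ (expTilt ω h s) f)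
      (weightedMean μ (expTilt ω h t) (fun x => h x * f x) -
        weightedMean μ (expTilt ω h t) h * weightedMean μ (expTilt ω h t) f) t := by
  have hden := (hasDerivAt_integral_expTilt hh hω).2
  have hnum := (hasDerivAt_integral_expTilt (ω := fun x => f x * ω x) hh
    (by simpa only [expTilt_mul_left] using hf)).2
  simp only [expTilt_mul_left] at hnum
  refine (hnum.div hden h0).congr_deriv ?_
  simp only [weightedMean, mul_assoc]
  generalize ∫ x, expTilt ω h t x ∂μ = N at h0
  field_simp

/-- Chebyshev's integral inequality: integrate `(f y - f x) * (g y - g x) ≥ 0` over the product. -/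
theorem integral_mul_integral_lt_of_monovary [TopologicalSpace X] [SecondCountableTopology X]
    [BorelSpace X] [SFinite μ] [μ.IsOpenPosMeasure]
    (hωc : Continuous ω) (hfc : Continuous f) (hgc : Continuous g)
    (hω0 : 0 ≤ ω) (hfg : Monovary f g) (hω : Integrable ω μ)
    (hf : Integrable (fun x => f x * ω x) μ) (hg : Integrable (fun x => g x * ω x) μ)
    (hfgω : Integrable (fun x => f x * (g x * ω x)) μ) {x y : X} (hx : 0 < ω x) (hy : 0 < ω y)
    (hfxy : f x < f y) (hgxy : g x < g y) :
    (∫ x, f x * ω x ∂μ) * ∫ x, g x * ω x ∂μ < (∫ x, f x * (g x * ω x) ∂μ) * ∫ x, ω x ∂μ := by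
  set G : X × X → ℝ := fun z => (f z.2 - f z.1) * (g z.2 - g z.1) * (ω z.1 * ω z.2)
  have hG : G =
      (fun z => f z.1 * (g z.1 * ω z.1) * ω z.2) + (fun z => ω z.1 * (f z.2 * (g z.2 * ω z.2))) -
      ((fun z => f z.1 * ω z.1 * (g z.2 * ω z.2)) + fun z => g z.1 * ω z.1 * (f z.2 * ω z.2)) := by
    ext z
    simp only [G, Pi.add_apply, Pi.sub_apply]
    ring
  have hi₁ := hfgω.mul_prod hω
  have hi₂ := hω.mul_prod hfgω
  have hi₃ := hf.mul_prod hg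
  have hi₄ := hg.mul_prod hf
  have hGpos : 0 < ∫ z, G z ∂μ.prod μ := by
    refine integral_pos_of_integrable_nonneg_nonzero (x := (x, y)) (by fun_prop)
      (hG ▸ (hi₁.add hi₂).sub (hi₃.add hi₄)) (fun z => ?_) ?_
    · exact mul_nonneg (hfg.sub_mul_sub_nonneg _ _) (mul_nonneg (hω0 _) (hω0 _))
    · exact (mul_pos (mul_pos (sub_pos.2 hfxy) (sub_pos.2 hgxy)) (mul_pos hx hy)).ne'
  rw [hG, integral_sub' (hi₁.add hi₂) (hi₃.add hi₄), integral_add' hi₁ hi₂,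
    integral_add' hi₃ hi₄, integral_prod_mul (fun x => f x * (g x * ω x)) ω,
    integral_prod_mul ω fun x => f x * (g x * ω x),
    integral_prod_mul (fun x => f x * ω x) fun x => g x * ω x,
    integral_prod_mul (fun x => g x * ω x) fun x => f x * ω x] at hGpos
  linarith

theorem monovary_of_even_of_monotoneOn {f g : ℝ → ℝ} (hf : f.Even) (hg : g.Even)
    (hfm : MonotoneOn f (Ici 0)) (hgm : MonotoneOn g (Ici 0)) : Monovary f g := by
  have eq_abs {u : ℝ → ℝ} (hu : u.Even) (x : ℝ) : u x = u |x| := by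
    rcases abs_choice x with h | h <;> rw [h]
    exact (hu x).symm
  intro x y hxy
  rw [eq_abs hg x, eq_abs hg y] at hxy
  rw [eq_abs hf x, eq_abs hf y]
  have habs : |x| < |y| := by
    by_contra! hle
    exact hxy.not_ge (hgm (abs_nonneg y) (abs_nonneg x) hle)
  exact hfm (abs_nonneg x) (abs_nonneg y) habs.le

theorem deriv_weightedMean_expTilt_pos {ω f h : ℝ → ℝ} {t : ℝ}
    (hωc : Continuous ω) (hfc : Continuous f) (hhc : Continuous h)
    (hω0 : 0 ≤ ω) (hωpos : ∀ x, x ≠ 0 → 0 < ω x) (hf : f.Even) (hh : h.Even)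
    (hfm : StrictMonoOn f (Ici 0)) (hhm : StrictMonoOn h (Ici 0))
    (hωi : ∀ᶠ s in 𝓝 t, Integrable (expTilt ω h s))
    (hfi : ∀ᶠ s in 𝓝 t, Integrable (fun x => f x * expTilt ω h s x)) :
    0 < deriv (fun s => weightedMean volume (expTilt ω h s) f) t := by
  have hc : Continuous (expTilt ω h t) := by unfold expTilt; fun_prop
  have hnonneg : 0 ≤ expTilt ω h t := fun x => mul_nonneg (hω0 x) (exp_pos _).le
  have hpos (x : ℝ) (hx : x ≠ 0) : 0 < expTilt ω h t x := mul_pos (hωpos x hx) (exp_pos _)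
  have hN : 0 < ∫ x, expTilt ω h t x :=
    integral_pos_of_integrable_nonneg_nonzero hc hωi.self_of_nhds hnonneg
      (hpos 1 one_ne_zero).ne'
  have hhi := (hasDerivAt_integral_expTilt hhc.aemeasurable hωi).1
  have hhfi := (hasDerivAt_integral_expTilt (ω := fun x => f x * ω x) hhc.aemeasurable
    (by simpa only [expTilt_mul_left] using hfi)).1
  simp only [expTilt_mul_left] at hhfi
  have one_mem : (1 : ℝ) ∈ Ici (0 : ℝ) := zero_le_one' ℝ
  have two_mem : (2 : ℝ) ∈ Ici (0 : ℝ) := zero_le_two (α := ℝ)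
  have hcheb := integral_mul_integral_lt_of_monovary hc hhc hfc hnonneg
    (monovary_of_even_of_monotoneOn hh hf hhm.monotoneOn hfm.monotoneOn)
    hωi.self_of_nhds hhi hfi.self_of_nhds hhfi (hpos 1 one_ne_zero) (hpos 2 two_ne_zero)
    (hhm one_mem two_mem one_lt_two) (hfm one_mem two_mem one_lt_two)
  rw [(hasDerivAt_weightedMean_expTilt hhc.aemeasurable hωi hfi hN.ne').deriv, sub_pos]
  simp only [weightedMean, mul_assoc]
  rwa [div_mul_div_comm, div_lt_div_iff₀ (mul_pos hN hN) hN, ← mul_assoc,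
    mul_lt_mul_iff_left₀ hN]

end WeightedMean

section TiltedGaussian

variable {κ c : ℝ}

/-- The weight `(1 + y²) ^ c * exp (-κ y²)`: the stationary density at `μ = 0`, in the variable
`y = σm x / σa`. -/
noncomputable def tiltedGaussian (κ : ℝ) : ℝ → ℝ → ℝ :=
  expTilt (fun y => exp (-κ * y ^ 2)) (fun y => log (1 + y ^ 2))

/-- The mean of `y arctan y` under `tiltedGaussian κ c`; the slope `F'_μ[0]` is affine in it. -/
noncomputable def arctanMean (κ c : ℝ) : ℝ :=
  weightedMean volume (tiltedGaussian κ c) fun y => y * arctan y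

/-- The mean of `y²` under `tiltedGaussian κ c` biased by the factor `y arctan y`. -/
noncomputable def biasedSqMean (κ c : ℝ) : ℝ :=
  weightedMean volume (fun y => y * arctan y * tiltedGaussian κ c y) fun y => y ^ 2

theorem one_add_sq_pos (y : ℝ) : 0 < 1 + y ^ 2 := by positivity

theorem continuous_log_one_add_sq : Continuous fun y : ℝ => log (1 + y ^ 2) :=
  Continuous.log (by fun_prop) fun y => (one_add_sq_pos y).ne'

theorem strictMonoOn_log_one_add_sq : StrictMonoOn (fun y : ℝ => log (1 + y ^ 2)) (Ici 0) :=
  fun x (_ : 0 ≤ x) _ _ hxy => log_lt_log (one_add_sq_pos x) (by gcongr)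

theorem log_one_add_sq_le (y : ℝ) : log (1 + y ^ 2) ≤ 2 * |y| := by
  have hy : 0 < 1 + |y| := by positivity
  calc log (1 + y ^ 2) ≤ log ((1 + |y|) ^ 2) :=
        log_le_log (one_add_sq_pos y) (by rw [← sq_abs y]; nlinarith [abs_nonneg y])
    _ = 2 * log (1 + |y|) := by rw [log_pow]; norm_num
    _ ≤ 2 * |y| := by linarith [log_le_sub_one_of_pos hy]

theorem strictMonoOn_mul_arctan : StrictMonoOn (fun y : ℝ => y * arctan y) (Ici 0) :=
  fun x (hx : 0 ≤ x) _ _ hxy =>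
    mul_lt_mul'' hxy (arctan_strictMono hxy) hx (arctan_nonneg.2 hx)

theorem even_mul_arctan : Function.Even fun y : ℝ => y * arctan y := fun y => by
  simp only [arctan_neg, neg_mul_neg]

theorem mul_arctan_pos {y : ℝ} (hy : y ≠ 0) : 0 < y * arctan y := by
  rcases hy.lt_or_gt with h | h
  · exact mul_pos_of_neg_of_neg h (arctan_lt_zero.2 h)
  · exact mul_pos h (arctan_pos.2 h)

theorem mul_arctan_nonneg (y : ℝ) : 0 ≤ y * arctan y := by
  rcases eq_or_ne y 0 with rfl | hy
  · simp
  · exact (mul_arctan_pos hy).le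

theorem abs_arctan_le (y : ℝ) : |arctan y| ≤ π / 2 :=
  abs_le.2 ⟨(neg_pi_div_two_lt_arctan y).le, (arctan_lt_pi_div_two y).le⟩

theorem tiltedGaussian_pos (κ c y : ℝ) : 0 < tiltedGaussian κ c y :=
  mul_pos (exp_pos _) (exp_pos _)

theorem continuous_tiltedGaussian (κ c : ℝ) : Continuous (tiltedGaussian κ c) := by
  have := continuous_log_one_add_sq
  unfold tiltedGaussian expTilt
  fun_prop

theorem even_tiltedGaussian (κ c : ℝ) : (tiltedGaussian κ c).Even := fun y => by
  simp only [tiltedGaussian, expTilt, neg_sq]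

theorem tiltedGaussian_le (hκ : 0 < κ) (c y : ℝ) :
    tiltedGaussian κ c y ≤ exp (2 * c ^ 2 / κ) * exp (-(κ / 2) * y ^ 2) := by
  have hlog : c * log (1 + y ^ 2) ≤ |c| * (2 * |y|) := by
    have : 0 ≤ log (1 + y ^ 2) := log_nonneg (by nlinarith)
    gcongr
    · exact le_abs_self c
    · exact log_one_add_sq_le y
  have hamgm : |c| * (2 * |y|) ≤ 2 * c ^ 2 / κ + κ / 2 * y ^ 2 := by
    rw [← sq_abs c, ← sq_abs y, ← sub_nonneg]
    have : 2 * |c| ^ 2 / κ + κ / 2 * |y| ^ 2 - |c| * (2 * |y|) =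
        (2 * |c| - κ * |y|) ^ 2 / (2 * κ) := by field_simp; ring
    rw [this]
    positivity
  rw [tiltedGaussian, expTilt, ← exp_add, ← exp_add]
  exact exp_le_exp.2 (by linarith)

theorem integrable_mul_pow_mul_tiltedGaussian (hκ : 0 < κ) (c : ℝ) {b : ℝ → ℝ}
    (hb : Continuous b) {C : ℝ} (hC : ∀ y, |b y| ≤ C) (k : ℕ) :
    Integrable fun y => b y * (y ^ k * tiltedGaussian κ c y) := by
  have hgauss : Integrable fun y : ℝ => y ^ k * exp (-(κ / 2) * y ^ 2) := by
    simpa only [rpow_natCast] using integrable_rpow_mul_exp_neg_mul_sq (half_pos hκ)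
      (neg_one_lt_zero.trans_le k.cast_nonneg)
  have hpow : Integrable fun y => y ^ k * tiltedGaussian κ c y := by
    refine (hgauss.norm.const_mul (exp (2 * c ^ 2 / κ))).mono'
      (by have := continuous_tiltedGaussian κ c; fun_prop) (ae_of_all _ fun y => ?_)
    calc ‖y ^ k * tiltedGaussian κ c y‖ = |y ^ k| * tiltedGaussian κ c y := by
          rw [norm_mul, norm_eq_abs, norm_of_nonneg (tiltedGaussian_pos κ c y).le]
      _ ≤ |y ^ k| * (exp (2 * c ^ 2 / κ) * exp (-(κ / 2) * y ^ 2)) := by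
          gcongr
          exact tiltedGaussian_le hκ c y
      _ = exp (2 * c ^ 2 / κ) * ‖y ^ k * exp (-(κ / 2) * y ^ 2)‖ := by
          rw [norm_mul, norm_eq_abs, norm_of_nonneg (exp_pos _).le]; ring
  exact hpow.bdd_mul hb.aestronglyMeasurable (ae_of_all _ hC)

theorem integrable_tiltedGaussian (hκ : 0 < κ) (c : ℝ) : Integrable (tiltedGaussian κ c) := by
  simpa using integrable_mul_pow_mul_tiltedGaussian hκ c (b := 1) continuous_one
    (C := 1) (by simp) 0

theorem integrable_arctan_mul_pow_mul_tiltedGaussian (hκ : 0 < κ) (c : ℝ) (k : ℕ) :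
    Integrable fun y => arctan y * (y ^ k * tiltedGaussian κ c y) :=
  integrable_mul_pow_mul_tiltedGaussian hκ c continuous_arctan abs_arctan_le k

theorem integrable_mul_arctan_mul_tiltedGaussian (hκ : 0 < κ) (c : ℝ) :
    Integrable fun y => y * arctan y * tiltedGaussian κ c y :=
  (integrable_arctan_mul_pow_mul_tiltedGaussian hκ c 1).congr (ae_of_all _ fun y => by ring)

theorem integrable_sq_mul_mul_arctan_mul_tiltedGaussian (hκ : 0 < κ) (c : ℝ) :
    Integrable fun y => y ^ 2 * (y * arctan y * tiltedGaussian κ c y) :=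
  (integrable_arctan_mul_pow_mul_tiltedGaussian hκ c 3).congr (ae_of_all _ fun y => by ring)

theorem integral_tiltedGaussian_pos (hκ : 0 < κ) (c : ℝ) : 0 < ∫ y, tiltedGaussian κ c y :=
  integral_pos_of_integrable_nonneg_nonzero (continuous_tiltedGaussian κ c)
    (integrable_tiltedGaussian hκ c) (fun y => (tiltedGaussian_pos κ c y).le)
    (tiltedGaussian_pos κ c 0).ne'

theorem integral_mul_arctan_mul_tiltedGaussian_pos (hκ : 0 < κ) (c : ℝ) :
    0 < ∫ y, y * arctan y * tiltedGaussian κ c y :=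
  integral_pos_of_integrable_nonneg_nonzero
    (by have := continuous_tiltedGaussian κ c; fun_prop)
    (integrable_mul_arctan_mul_tiltedGaussian hκ c)
    (fun y => mul_nonneg (mul_arctan_nonneg y) (tiltedGaussian_pos κ c y).le)
    (mul_pos (mul_arctan_pos one_ne_zero) (tiltedGaussian_pos κ c 1)).ne'

theorem arctanMean_pos (hκ : 0 < κ) (c : ℝ) : 0 < arctanMean κ c :=
  div_pos (integral_mul_arctan_mul_tiltedGaussian_pos hκ c) (integral_tiltedGaussian_pos hκ c)

theorem deriv_arctanMean_pos (hκ : 0 < κ) (c : ℝ) : 0 < deriv (arctanMean κ) c :=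
  deriv_weightedMean_expTilt_pos (by fun_prop) (by fun_prop) continuous_log_one_add_sq
    (fun _ => (exp_pos _).le) (fun _ _ => exp_pos _) even_mul_arctan (fun y => by simp)
    strictMonoOn_mul_arctan strictMonoOn_log_one_add_sq
    (.of_forall (integrable_tiltedGaussian hκ))
    (.of_forall (integrable_mul_arctan_mul_tiltedGaussian hκ))

theorem hasDerivAt_arctanMean (hκ : 0 < κ) (c : ℝ) :
    HasDerivAt (arctanMean κ) (deriv (arctanMean κ) c) c :=
  (differentiableAt_of_deriv_ne_zero (deriv_arctanMean_pos hκ c).ne').hasDerivAt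

theorem deriv_biasedSqMean_pos (hκ : 0 < κ) (c : ℝ) : 0 < deriv (biasedSqMean κ) c := by
  have h := deriv_weightedMean_expTilt_pos (t := c)
    (ω := fun y => y * arctan y * exp (-κ * y ^ 2)) (f := fun y => y ^ 2)
    (by fun_prop) (by fun_prop) continuous_log_one_add_sq
    (fun y => mul_nonneg (mul_arctan_nonneg y) (exp_pos _).le)
    (fun y hy => mul_pos (mul_arctan_pos hy) (exp_pos _)) (fun y => by simp) (fun y => by simp)
    (pow_left_strictMonoOn₀ two_ne_zero) strictMonoOn_log_one_add_sq
  simp only [expTilt_mul_left] at h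
  exact h (.of_forall (integrable_mul_arctan_mul_tiltedGaussian hκ))
    (.of_forall (integrable_sq_mul_mul_arctan_mul_tiltedGaussian hκ))

theorem hasDerivAt_tiltedGaussian (κ c y : ℝ) :
    HasDerivAt (tiltedGaussian κ c)
      ((2 * c * y / (1 + y ^ 2) - 2 * κ * y) * tiltedGaussian κ c y) y := by
  have hsq : HasDerivAt (fun y : ℝ => y ^ 2) (2 * y) y := by simpa using hasDerivAt_pow 2 y
  have hlog := (hsq.const_add 1).log (one_add_sq_pos y).ne'
  refine ((hsq.const_mul (-κ)).exp.mul (hlog.const_mul c).exp).congr_deriv ?_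
  rw [tiltedGaussian, expTilt]
  ring

-- Integrate the derivative of `(1 + y²) arctan y * tiltedGaussian κ c y`; the factor `1 + y²`
-- clears both denominators.
theorem integral_tiltedGaussian_eq (hκ : 0 < κ) (c : ℝ) :
    ∫ y, tiltedGaussian κ c y =
      (2 * κ - 2 * c - 2) * (∫ y, y * arctan y * tiltedGaussian κ c y) +
        2 * κ * ∫ y, y ^ 2 * (y * arctan y * tiltedGaussian κ c y) := by
  have h₀ := integrable_tiltedGaussian hκ c
  have h₁ := (integrable_mul_arctan_mul_tiltedGaussian hκ c).const_mul (2 * κ - 2 * c - 2)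
  have h₃ := (integrable_sq_mul_mul_arctan_mul_tiltedGaussian hκ c).const_mul (2 * κ)
  have hprim : Integrable fun y => (1 + y ^ 2) * arctan y * tiltedGaussian κ c y :=
    ((integrable_arctan_mul_pow_mul_tiltedGaussian hκ c 0).add
      (integrable_arctan_mul_pow_mul_tiltedGaussian hκ c 2)).congr
      (ae_of_all _ fun y => by simp only [Pi.add_apply]; ring)
  have hderiv (y : ℝ) : HasDerivAt (fun y => (1 + y ^ 2) * arctan y * tiltedGaussian κ c y)
      (tiltedGaussian κ c y - ((2 * κ - 2 * c - 2) * (y * arctan y * tiltedGaussian κ c y) +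
        2 * κ * (y ^ 2 * (y * arctan y * tiltedGaussian κ c y)))) y := by
    have hsq : HasDerivAt (fun y : ℝ => 1 + y ^ 2) (2 * y) y := by
      simpa using (hasDerivAt_pow 2 y).const_add 1
    refine ((hsq.mul (hasDerivAt_arctan y)).mul (hasDerivAt_tiltedGaussian κ c y)).congr_deriv ?_
    simp only [Pi.mul_apply]
    have := (one_add_sq_pos y).ne'
    field_simp
    ring
  have hzero := (integral_sub' h₀ (h₁.add h₃)).symm.trans
    (integral_eq_zero_of_hasDerivAt_of_integrable hderiv (h₀.sub (h₁.add h₃)) hprim)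
  rw [integral_add' h₁ h₃, integral_const_mul, integral_const_mul] at hzero
  linarith

theorem arctanMean_mul_biasedSqMean (hκ : 0 < κ) (c : ℝ) :
    arctanMean κ c * (2 * κ * (1 + biasedSqMean κ c) - 2 * c - 2) = 1 := by
  have hibp := integral_tiltedGaussian_eq hκ c
  have h₀ := (integral_tiltedGaussian_pos hκ c).ne'
  have h₁ := (integral_mul_arctan_mul_tiltedGaussian_pos hκ c).ne'
  rw [arctanMean, biasedSqMean, weightedMean, weightedMean]
  generalize ∫ y, tiltedGaussian κ c y = N₀ at *
  generalize ∫ y, y * arctan y * tiltedGaussian κ c y = N₁ at *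
  generalize ∫ y, y ^ 2 * (y * arctan y * tiltedGaussian κ c y) = N₃ at *
  field_simp
  linarith

theorem deriv_arctanMean_lt (hκ : 0 < κ) (c : ℝ) :
    deriv (arctanMean κ) c < 2 * arctanMean κ c ^ 2 := by
  have hψ := (differentiableAt_of_deriv_ne_zero (deriv_biasedSqMean_pos hκ c).ne').hasDerivAt
  have hprod := (hasDerivAt_arctanMean hκ c).mul ((((hψ.const_add 1).const_mul (2 * κ)).sub
    ((hasDerivAt_id c).const_mul 2)).sub_const 2)
  have hconst := hprod.unique ((hasDerivAt_const c 1).congr_of_eventuallyEq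
    (.of_forall fun c => arctanMean_mul_biasedSqMean hκ c))
  have hderiv : deriv (arctanMean κ) c =
      arctanMean κ c ^ 2 * (2 - 2 * κ * deriv (biasedSqMean κ) c) := by
    simp only [Pi.sub_apply, id_eq] at hconst
    linear_combination arctanMean κ c * hconst -
      deriv (arctanMean κ) c * arctanMean_mul_biasedSqMean hκ c
  have := mul_pos (pow_pos (arctanMean_pos hκ c) 2) (mul_pos hκ (deriv_biasedSqMean_pos hκ c))
  linarith

end TiltedGaussian

section SelfConsistency

variable {σa σm : ℝ}

theorem rho0_eq_expTilt (hσa : σa ≠ 0) (hσm : σm ≠ 0) (ν a θ μ x : ℝ) :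
    rho0 ν σa σm a θ μ x =
      expTilt (tiltedGaussian (σa ^ 2 / σm ^ 4)
        (a / σm ^ 2 - θ / σm ^ 2 - ν + σa ^ 2 / σm ^ 4)) arctan (μ * (2 * θ / (σa * σm)))
        (σm / σa * x) := by
  have hsq : σm ^ 2 / σa ^ 2 * x ^ 2 = (σm / σa * x) ^ 2 := by ring
  rw [rho0, tiltedGaussian, expTilt, expTilt, ← exp_add, ← exp_add, hsq, div_mul_eq_mul_div σm]
  congr 1
  field_simp
  ring

theorem integrable_pow_mul_expTilt_arctan {κ : ℝ} (hκ : 0 < κ) (c t : ℝ) (k : ℕ) :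
    Integrable fun y => y ^ k * expTilt (tiltedGaussian κ c) arctan t y := by
  have hbound (y : ℝ) : |exp (t * arctan y)| ≤ exp (|t| * (π / 2)) := by
    rw [abs_exp, exp_le_exp]
    calc t * arctan y ≤ |t| * |arctan y| := by rw [← abs_mul]; exact le_abs_self _
      _ ≤ |t| * (π / 2) := by gcongr; exact abs_arctan_le y
  exact (integrable_mul_pow_mul_tiltedGaussian hκ c (by fun_prop) hbound k).congr
    (ae_of_all _ fun y => by simp only [expTilt]; ring)

theorem integral_expTilt_arctan_pos {κ : ℝ} (hκ : 0 < κ) (c t : ℝ) :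
    0 < ∫ y, expTilt (tiltedGaussian κ c) arctan t y := by
  have hpos (y : ℝ) : 0 < expTilt (tiltedGaussian κ c) arctan t y :=
    mul_pos (tiltedGaussian_pos κ c y) (exp_pos _)
  refine integral_pos_of_integrable_nonneg_nonzero (x := 0) ?_
    (by simpa using integrable_pow_mul_expTilt_arctan hκ c t 0) (fun y => (hpos y).le)
    (hpos 0).ne'
  have := continuous_tiltedGaussian κ c
  unfold expTilt
  fun_prop

-- By parity the mean of `y` vanishes at tilt `0`, so the covariance of `y` and `arctan y` there is
-- just the mean of their product.
theorem hasDerivAt_weightedMean_arctan {κ : ℝ} (hκ : 0 < κ) (c : ℝ) :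
    HasDerivAt (fun t => weightedMean volume (expTilt (tiltedGaussian κ c) arctan t) fun y => y)
      (arctanMean κ c) 0 := by
  have h := hasDerivAt_weightedMean_expTilt (t := 0) (f := fun y => y)
    measurable_arctan.aemeasurable
    (.of_forall fun t => by simpa using integrable_pow_mul_expTilt_arctan hκ c t 0)
    (.of_forall fun t => by simpa using integrable_pow_mul_expTilt_arctan hκ c t 1)
    (integral_expTilt_arctan_pos hκ c 0).ne'
  have hzero : expTilt (tiltedGaussian κ c) arctan 0 = tiltedGaussian κ c := by
    ext y; simp [expTilt]
  refine h.congr_deriv ?_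
  rw [hzero, weightedMean_eq_zero_of_even_of_odd (f := fun y => y) (even_tiltedGaussian κ c)
    fun _ => rfl, mul_zero, sub_zero]
  simp only [arctanMean, mul_comm]

theorem F_eq_weightedMean (hσa : σa ≠ 0) (hσm : σm ≠ 0) (ν a θ μ : ℝ) :
    F ν σa σm a θ μ = σa / σm * weightedMean volume
      (expTilt (tiltedGaussian (σa ^ 2 / σm ^ 4)
        (a / σm ^ 2 - θ / σm ^ 2 - ν + σa ^ 2 / σm ^ 4)) arctan (μ * (2 * θ / (σa * σm))))
      (fun y => y) - μ := by
  set κ := σa ^ 2 / σm ^ 4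
  have hκ : 0 < κ := by positivity
  set ω := expTilt (tiltedGaussian κ (a / σm ^ 2 - θ / σm ^ 2 - ν + κ)) arctan
    (μ * (2 * θ / (σa * σm)))
  have hω : Integrable ω := by simpa using integrable_pow_mul_expTilt_arctan hκ _ _ 0
  have hyω : Integrable fun y => y * ω y := by
    simpa using integrable_pow_mul_expTilt_arctan hκ _ _ 1
  have hω0 : 0 < ∫ y, ω y := integral_expTilt_arctan_pos hκ _ _
  have hrho0 : rho0 ν σa σm a θ μ = fun x => ω (σm / σa * x) :=
    funext (rho0_eq_expTilt hσa hσm ν a θ μ)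
  have hshift : (fun x => x - μ) = fun x => σa / σm * (σm / σa * x) - μ := by
    ext x; field_simp
  calc F ν σa σm a θ μ
      = weightedMean volume (fun x => ω (σm / σa * x))
          (fun x => σa / σm * (σm / σa * x) - μ) := by rw [← hrho0, ← hshift]; rfl
    _ = weightedMean volume ω (fun y => σa / σm * y - μ) :=
        weightedMean_comp_mul_left ω (fun y => σa / σm * y - μ) (div_ne_zero hσm hσa)
    _ = σa / σm * weightedMean volume ω (fun y => y) - μ := by
        rw [weightedMean_sub_const hω
          (by simpa only [mul_assoc] using hyω.const_mul (σa / σm)) hω0.ne',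
          weightedMean_const_mul]

theorem Fmu'_eq_arctanMean (hσa : σa ≠ 0) (hσm : σm ≠ 0) (ν a θ : ℝ) :
    Fmu' ν σa σm a θ = 2 * (θ / σm ^ 2) * arctanMean (σa ^ 2 / σm ^ 4)
      (a / σm ^ 2 - θ / σm ^ 2 - ν + σa ^ 2 / σm ^ 4) - 1 := by
  have hκ : 0 < σa ^ 2 / σm ^ 4 := by positivity
  have hmean := (hasDerivAt_weightedMean_arctan hκ
    (a / σm ^ 2 - θ / σm ^ 2 - ν + σa ^ 2 / σm ^ 4)).scomp_of_eq (0 : ℝ)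
    (hasDerivAt_mul_const (2 * θ / (σa * σm))) (zero_mul _).symm
  have hF := ((hmean.const_mul (σa / σm)).sub (hasDerivAt_id 0)).congr_of_eventuallyEq
    (.of_forall (F_eq_weightedMean hσa hσm ν a θ))
  rw [Fmu', hF.deriv, smul_eq_mul]
  field_simp

theorem hasDerivAt_Fmu'_theta (hσa : σa ≠ 0) (hσm : σm ≠ 0) (ν a θ : ℝ) :
    HasDerivAt (fun θ => Fmu' ν σa σm a θ)
      (2 / σm ^ 2 * (arctanMean (σa ^ 2 / σm ^ 4)
          (a / σm ^ 2 - θ / σm ^ 2 - ν + σa ^ 2 / σm ^ 4) -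
        θ / σm ^ 2 * deriv (arctanMean (σa ^ 2 / σm ^ 4))
          (a / σm ^ 2 - θ / σm ^ 2 - ν + σa ^ 2 / σm ^ 4))) θ := by
  have hκ : 0 < σa ^ 2 / σm ^ 4 := by positivity
  simp only [Fmu'_eq_arctanMean hσa hσm]
  have hθ := (hasDerivAt_id θ).div_const (σm ^ 2)
  have hmean := (hasDerivAt_arctanMean hκ _).comp θ
    (((hθ.const_sub (a / σm ^ 2)).sub_const ν).add_const (σa ^ 2 / σm ^ 4))
  refine (((hθ.const_mul 2).mul hmean).sub_const 1).congr_deriv ?_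
  simp only [Function.comp_apply, id_eq]
  ring

theorem hasDerivAt_Fmu'_a (hσa : σa ≠ 0) (hσm : σm ≠ 0) (ν a θ : ℝ) :
    HasDerivAt (fun a => Fmu' ν σa σm a θ)
      (2 * (θ / σm ^ 2) * (deriv (arctanMean (σa ^ 2 / σm ^ 4))
        (a / σm ^ 2 - θ / σm ^ 2 - ν + σa ^ 2 / σm ^ 4) / σm ^ 2)) a := by
  have hκ : 0 < σa ^ 2 / σm ^ 4 := by positivity
  simp only [Fmu'_eq_arctanMean hσa hσm]
  have hmean := (hasDerivAt_arctanMean hκ _).comp a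
    (((((hasDerivAt_id a).div_const (σm ^ 2)).sub_const (θ / σm ^ 2)).sub_const ν).add_const
      (σa ^ 2 / σm ^ 4))
  refine ((hmean.const_mul (2 * (θ / σm ^ 2))).sub_const 1).congr_deriv ?_
  simp only [id_eq]
  ring

end SelfConsistency

theorem stmt9_general (ν σa σm a₀ θ₀ : ℝ) (hσa : σa ≠ 0) (hσm : σm ≠ 0)
    (hroot : Fmu' ν σa σm a₀ θ₀ = 0) :
    0 < deriv (fun θ : ℝ => Fmu' ν σa σm a₀ θ) θ₀ ∧
    0 < deriv (fun a : ℝ => Fmu' ν σa σm a θ₀) a₀ := by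
  rw [(hasDerivAt_Fmu'_theta hσa hσm ν a₀ θ₀).deriv,
    (hasDerivAt_Fmu'_a hσa hσm ν a₀ θ₀).deriv]
  rw [Fmu'_eq_arctanMean hσa hσm, sub_eq_zero] at hroot
  have hκ : 0 < σa ^ 2 / σm ^ 4 := by positivity
  set κ := σa ^ 2 / σm ^ 4
  set c := a₀ / σm ^ 2 - θ₀ / σm ^ 2 - ν + κ
  have hφ : 0 < arctanMean κ c := arctanMean_pos hκ c
  have hφ' : 0 < deriv (arctanMean κ) c := deriv_arctanMean_pos hκ c
  have hτ : 0 < θ₀ / σm ^ 2 := by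
    have : 0 < 2 * (θ₀ / σm ^ 2) := pos_of_mul_pos_left (hroot ▸ one_pos) hφ.le
    linarith
  have hlt : θ₀ / σm ^ 2 * deriv (arctanMean κ) c < arctanMean κ c :=
    calc θ₀ / σm ^ 2 * deriv (arctanMean κ) c
        < θ₀ / σm ^ 2 * (2 * arctanMean κ c ^ 2) := by
          gcongr
          exact deriv_arctanMean_lt hκ c
      _ = arctanMean κ c := by linear_combination arctanMean κ c * hroot
  exact ⟨mul_pos (by positivity) (sub_pos.2 hlt), by positivity⟩

/-- At any root (a₀, θ₀) of (a,θ) ↦ F'_μ(ν,σa,σm,a,θ)[0], the partial derivatives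
with respect to θ and with respect to a are both strictly positive. -/
theorem stmt9 (ν σa σm a₀ θ₀ : ℝ) (hν : ν ∈ Set.Icc (0 : ℝ) 1) (hσa : 0 < σa) (hσm : 0 < σm)
    (ha₀ : 0 < a₀) (hθ₀ : 0 < θ₀) (hroot : Fmu' ν σa σm a₀ θ₀ = 0) :
    0 < deriv (fun θ : ℝ => Fmu' ν σa σm a₀ θ) θ₀ ∧
    0 < deriv (fun a : ℝ => Fmu' ν σa σm a θ₀) a₀ := by
  exact stmt9_general ν σa σm a₀ θ₀ hσa.ne' hσm.ne' hroot
end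

section
/- Fix a ∈ ℝ, θ > 0, σa > 0, σm > 0, ν ∈ [0,1] and μ ∈ ℝ. Then the density ρ0[μ] satisfies the stationary (zero-flux) Fokker–Planck equation: for every x ∈ ℝ, (a·x − x³ + (1−ν)·σm²·x + θ·(μ − x))·ρ0[μ](x) = d/dx [ (1/2)·(σm²·x² + σa²)·ρ0[μ](x) ]. -/
open MeasureTheory Real Set Filter

/-!
Write `D` for the squared diffusion coefficient, `b` for the drift and `ρ0 = exp U`. Where `D ≠ 0`,
the zero-flux equation `b * ρ0 = (D * ρ0 / 2)'` is equivalent to `U' = (2 * b - D') / D`. Here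
`D = σm² x² + σa²` is an irreducible quadratic and `2 * b - D'` a cubic, so integrating the partial
fraction decomposition gives a logarithm, an arctangent and a quadratic polynomial: together they
form the exponent of `ρ0`.
-/

/-- The exponent of `rho0`, so that `ρ0[μ] = exp (logRho0 μ)`. -/
noncomputable def logRho0 (ν σa σm a θ μ x : ℝ) : ℝ :=
  ((a - θ - ν * σm ^ 2 + σa ^ 2 / σm ^ 2) / σm ^ 2) * Real.log (1 + (σm ^ 2 / σa ^ 2) * x ^ 2) +
    (2 * θ * μ / (σa * σm)) * Real.arctan (σm * x / σa) - x ^ 2 / σm ^ 2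

/-- The Itô-corrected drift of the McKean–Vlasov SDE with its mean held at `m₁ = μ`. In the
correction `(1 - ν) * σm ^ 2 * x`, `ν = 1` is the Itô and `ν = 1 / 2` the Stratonovich
interpretation of the multiplicative noise. -/
def itoDrift (ν σm a θ μ x : ℝ) : ℝ :=
  a * x - x ^ 3 + (1 - ν) * σm ^ 2 * x + θ * (μ - x)

/-- The squared diffusion coefficient of the McKean–Vlasov SDE: the additive noise and the
multiplicative noise are independent, so their squares add. -/
def sqDiffusion (σa σm x : ℝ) : ℝ :=
  σm ^ 2 * x ^ 2 + σa ^ 2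

lemma hasDerivAt_half_mul_exp_of_zero_flux {D U : ℝ → ℝ} {D' b x : ℝ} (hDx : D x ≠ 0)
    (hD : HasDerivAt D D' x) (hU : HasDerivAt U ((2 * b - D') / D x) x) :
    HasDerivAt (fun y => 1 / 2 * D y * Real.exp (U y)) (b * Real.exp (U x)) x := by
  refine ((hD.const_mul (1 / 2)).mul hU.exp).congr_deriv ?_
  field_simp
  ring

lemma hasDerivAt_log_one_add_sq_div_sq_mul_sq {s : ℝ} (hs : s ≠ 0) (m x : ℝ) :
    HasDerivAt (fun y => Real.log (1 + (m ^ 2 / s ^ 2) * y ^ 2))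
      (2 * m ^ 2 * x / (m ^ 2 * x ^ 2 + s ^ 2)) x := by
  have hpos : 1 + (m ^ 2 / s ^ 2) * x ^ 2 ≠ 0 := by positivity
  refine ((((hasDerivAt_pow 2 x).const_mul (m ^ 2 / s ^ 2)).const_add 1).log hpos).congr_deriv ?_
  field_simp
  ring

lemma hasDerivAt_arctan_mul_div {s : ℝ} (hs : s ≠ 0) (m x : ℝ) :
    HasDerivAt (fun y => Real.arctan (m * y / s)) (m * s / (m ^ 2 * x ^ 2 + s ^ 2)) x := by
  refine ((hasDerivAt_const_mul m).div_const s).arctan.congr_deriv ?_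
  field_simp
  ring

lemma sqDiffusion_pos {σa : ℝ} (hσa : σa ≠ 0) (σm x : ℝ) : 0 < sqDiffusion σa σm x := by
  unfold sqDiffusion
  positivity

lemma hasDerivAt_sqDiffusion (σa σm x : ℝ) :
    HasDerivAt (sqDiffusion σa σm) (2 * σm ^ 2 * x) x := by
  refine (((hasDerivAt_pow 2 x).const_mul (σm ^ 2)).add_const (σa ^ 2)).congr_deriv ?_
  ring

-- Polynomial division of the cubic by the quadratic: the odd part of the remainder integrates to
-- the logarithm, the even part to the arctangent, and the linear quotient to the quadratic term.
lemma two_mul_itoDrift_sub_div_sqDiffusion {σa σm : ℝ} (hσa : σa ≠ 0) (hσm : σm ≠ 0)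
    (ν a θ μ x : ℝ) :
    (2 * itoDrift ν σm a θ μ x - 2 * σm ^ 2 * x) / sqDiffusion σa σm x =
      (a - θ - ν * σm ^ 2 + σa ^ 2 / σm ^ 2) / σm ^ 2 *
          (2 * σm ^ 2 * x / sqDiffusion σa σm x) +
        2 * θ * μ / (σa * σm) * (σm * σa / sqDiffusion σa σm x) - 2 * x / σm ^ 2 := by
  have hD : sqDiffusion σa σm x ≠ 0 := (sqDiffusion_pos hσa σm x).ne'
  field_simp
  unfold itoDrift sqDiffusion
  ring

lemma hasDerivAt_logRho0 {σa σm : ℝ} (hσa : σa ≠ 0) (hσm : σm ≠ 0) (ν a θ μ x : ℝ) :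
    HasDerivAt (logRho0 ν σa σm a θ μ)
      ((2 * itoDrift ν σm a θ μ x - 2 * σm ^ 2 * x) / sqDiffusion σa σm x) x := by
  have hsq : HasDerivAt (fun y : ℝ => y ^ 2) (2 * x) x := by simpa using hasDerivAt_pow 2 x
  rw [two_mul_itoDrift_sub_div_sqDiffusion hσa hσm]
  exact (((hasDerivAt_log_one_add_sq_div_sq_mul_sq hσa σm x).const_mul _).add
    ((hasDerivAt_arctan_mul_div hσa σm x).const_mul _)).sub (hsq.div_const _)

theorem stmt11_general {σa σm : ℝ} (hσa : σa ≠ 0) (hσm : σm ≠ 0) (a θ ν μ x : ℝ) :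
    HasDerivAt (fun y => (1 / 2) * (σm ^ 2 * y ^ 2 + σa ^ 2) * rho0 ν σa σm a θ μ y)
      ((a * x - x ^ 3 + (1 - ν) * σm ^ 2 * x + θ * (μ - x)) * rho0 ν σa σm a θ μ x) x :=
  hasDerivAt_half_mul_exp_of_zero_flux (sqDiffusion_pos hσa σm x).ne'
    (hasDerivAt_sqDiffusion σa σm x) (hasDerivAt_logRho0 hσa hσm ν a θ μ x)

/-- ρ0[μ] satisfies the stationary (zero-flux) Fokker–Planck equation: the
Itô-corrected drift times ρ0 equals the derivative of half the squared diffusion times ρ0. -/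
theorem stmt11 (a θ σa σm ν μ : ℝ) (hθ : 0 < θ) (hσa : 0 < σa) (hσm : 0 < σm)
    (hν : ν ∈ Set.Icc (0 : ℝ) 1) :
    ∀ x : ℝ,
      (a * x - x ^ 3 + (1 - ν) * σm ^ 2 * x + θ * (μ - x)) * rho0 ν σa σm a θ μ x =
        deriv (fun y : ℝ => (1 / 2) * (σm ^ 2 * y ^ 2 + σa ^ 2) * rho0 ν σa σm a θ μ y) x :=
  fun x => (stmt11_general hσa.ne' hσm.ne' a θ ν μ x).deriv.symm
end

section
/- Let θ > 0 and σa > 0, and let m_{2p} denote the (2p)-th moment of the symmetric Dawson–Shiino stationary measure. Then for every integer p ≥ 2, m_{2p} = (1−θ)·m_{2p−2} + (1/2)·(2p−3)·σa²·m_{2p−4} (with m₀ = 1). -/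
open MeasureTheory Real

/-- Symmetric Dawson–Shiino unnormalised stationary density ρDS[0]. -/
noncomputable def rhoDS0 (σa θ x : ℝ) : ℝ :=
  Real.exp (-(2 / σa ^ 2) * (x ^ 4 / 4 - (1 - θ) * x ^ 2 / 2))

/-- k-th moment of the symmetric Dawson–Shiino stationary measure. -/
noncomputable def mDS (σa θ : ℝ) (k : ℕ) : ℝ :=
  (∫ x : ℝ, x ^ k * rhoDS0 σa θ x) / ∫ x : ℝ, rhoDS0 σa θ x

/-!
The stationary density is a Gibbs density `exp (-V)` with a quartic potential `V`. Since `V`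
dominates a quadratic, all moments are finite and no boundary terms appear in the integration by
parts `∫ f' e^(-V) = ∫ f V' e^(-V)`. For `f = x ^ (k + 1)` the cubic `V'` turns this identity into
a linear relation between the moments of orders `k`, `k + 2` and `k + 4`.
-/

theorem integral_deriv_mul_exp_neg {f f' V V' : ℝ → ℝ}
    (hf : ∀ x, HasDerivAt f (f' x) x) (hV : ∀ x, HasDerivAt V (V' x) x)
    (hfV : Integrable fun x => f x * exp (-V x))
    (hf'V : Integrable fun x => f' x * exp (-V x))
    (hfV' : Integrable fun x => f x * (V' x * exp (-V x))) :
    ∫ x, f' x * exp (-V x) = ∫ x, f x * (V' x * exp (-V x)) := by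
  have hderiv (x : ℝ) : HasDerivAt (fun x => f x * exp (-V x))
      (f' x * exp (-V x) - f x * (V' x * exp (-V x))) x :=
    ((hf x).mul (hV x).fun_neg.exp).congr_deriv (by ring)
  have hzero := integral_eq_zero_of_hasDerivAt_of_integrable hderiv (hf'V.sub hfV') hfV
  rwa [integral_sub hf'V hfV', sub_eq_zero] at hzero

theorem integrable_pow_mul_exp_neg_of_quadratic_le {V : ℝ → ℝ} {b C : ℝ}
    (hV : AEStronglyMeasurable V) (hb : 0 < b) (hle : ∀ x, b * x ^ 2 - C ≤ V x) (k : ℕ) :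
    Integrable fun x => x ^ k * exp (-V x) := by
  have hgauss : Integrable fun x : ℝ => exp C * (x ^ k * exp (-b * x ^ 2)) := by
    have hk : (-1 : ℝ) < k := neg_one_lt_zero.trans_le k.cast_nonneg
    simpa only [rpow_natCast] using (integrable_rpow_mul_exp_neg_mul_sq hb hk).const_mul (exp C)
  refine hgauss.mono ((continuous_pow k).aestronglyMeasurable.mul
    (continuous_exp.comp_aestronglyMeasurable hV.neg)) (.of_forall fun x => ?_)
  have hexp : exp (-V x) ≤ exp C * exp (-b * x ^ 2) := by
    rw [← exp_add, exp_le_exp]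
    linarith [hle x]
  calc ‖x ^ k * exp (-V x)‖
      = ‖x ^ k‖ * exp (-V x) := by rw [norm_mul, norm_of_nonneg (exp_nonneg _)]
    _ ≤ ‖x ^ k‖ * (exp C * exp (-b * x ^ 2)) := by gcongr
    _ = ‖exp C * (x ^ k * exp (-b * x ^ 2))‖ := by
      rw [norm_mul, norm_mul, norm_of_nonneg (exp_nonneg C), norm_of_nonneg (exp_nonneg _),
        mul_left_comm]

/-- The potential of the symmetric Dawson–Shiino stationary measure, divided by the diffusion
coefficient `σa ^ 2 / 2` so that the unnormalised density is `exp (-potentialDS)`. -/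
noncomputable def potentialDS (σa θ x : ℝ) : ℝ :=
  2 / σa ^ 2 * (x ^ 4 / 4 - (1 - θ) * x ^ 2 / 2)

section DawsonShiino

variable (σa θ : ℝ)

theorem rhoDS0_eq_exp_neg_potentialDS (x : ℝ) :
    rhoDS0 σa θ x = exp (-potentialDS σa θ x) := by
  rw [rhoDS0, potentialDS, neg_mul]

theorem hasDerivAt_potentialDS (x : ℝ) :
    HasDerivAt (potentialDS σa θ) (2 / σa ^ 2 * (x ^ 3 - (1 - θ) * x)) x := by
  have h := (((hasDerivAt_pow 4 x).div_const 4).sub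
    (((hasDerivAt_pow 2 x).const_mul (1 - θ)).div_const 2)).const_mul (2 / σa ^ 2)
  exact h.congr_deriv (by push_cast; ring)

theorem quadratic_le_potentialDS (x : ℝ) :
    2 / σa ^ 2 * x ^ 2 - 2 / σa ^ 2 * ((1 - θ) / 2 + 1) ^ 2 ≤ potentialDS σa θ x := by
  rw [potentialDS, ← mul_sub]
  refine mul_le_mul_of_nonneg_left ?_ (by positivity)
  linarith [sq_nonneg (x ^ 2 / 2 - ((1 - θ) / 2 + 1))]

variable {σa}

theorem integrable_pow_mul_rhoDS0 (hσa : σa ≠ 0) (k : ℕ) :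
    Integrable fun x => x ^ k * rhoDS0 σa θ x := by
  have hmeas : AEStronglyMeasurable (potentialDS σa θ) :=
    (continuous_iff_continuousAt.2 fun x =>
      (hasDerivAt_potentialDS σa θ x).continuousAt).aestronglyMeasurable
  simp only [rhoDS0_eq_exp_neg_potentialDS]
  exact integrable_pow_mul_exp_neg_of_quadratic_le hmeas (by positivity)
    (quadratic_le_potentialDS σa θ) k

theorem integral_rhoDS0_pos (hσa : σa ≠ 0) : 0 < ∫ x, rhoDS0 σa θ x :=
  integral_exp_pos (by simpa [rhoDS0] using integrable_pow_mul_rhoDS0 θ hσa 0)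

theorem integral_pow_mul_rhoDS0_recurrence (hσa : σa ≠ 0) (k : ℕ) :
    (k + 1) * ∫ x, x ^ k * rhoDS0 σa θ x =
      2 / σa ^ 2 * ((∫ x, x ^ (k + 4) * rhoDS0 σa θ x) -
        (1 - θ) * ∫ x, x ^ (k + 2) * rhoDS0 σa θ x) := by
  have hmom := integrable_pow_mul_rhoDS0 θ hσa
  have hf' (x : ℝ) : HasDerivAt (fun x : ℝ => x ^ (k + 1)) ((k + 1) * x ^ k) x := by
    simpa using hasDerivAt_pow (k + 1) x
  have hf'V : Integrable fun x => (k + 1) * x ^ k * rhoDS0 σa θ x := by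
    simpa only [mul_assoc] using (hmom k).const_mul (k + 1 : ℝ)
  have hexpand (x : ℝ) :
      x ^ (k + 1) * (2 / σa ^ 2 * (x ^ 3 - (1 - θ) * x) * rhoDS0 σa θ x) =
        2 / σa ^ 2 * (x ^ (k + 4) * rhoDS0 σa θ x - (1 - θ) * (x ^ (k + 2) * rhoDS0 σa θ x)) := by
    ring
  have hfV' : Integrable fun x =>
      x ^ (k + 1) * (2 / σa ^ 2 * (x ^ 3 - (1 - θ) * x) * rhoDS0 σa θ x) := by
    simp only [hexpand]
    exact ((hmom (k + 4)).sub ((hmom (k + 2)).const_mul (1 - θ))).const_mul (2 / σa ^ 2)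
  calc (k + 1) * ∫ x, x ^ k * rhoDS0 σa θ x
      = ∫ x, (k + 1) * x ^ k * rhoDS0 σa θ x := by
        simp only [mul_assoc, integral_const_mul]
    _ = ∫ x, x ^ (k + 1) * (2 / σa ^ 2 * (x ^ 3 - (1 - θ) * x) * rhoDS0 σa θ x) := by
        simp only [rhoDS0_eq_exp_neg_potentialDS] at hmom hf'V hfV' ⊢
        exact integral_deriv_mul_exp_neg hf' (hasDerivAt_potentialDS σa θ) (hmom (k + 1)) hf'V hfV'
    _ = 2 / σa ^ 2 * ((∫ x, x ^ (k + 4) * rhoDS0 σa θ x) -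
          (1 - θ) * ∫ x, x ^ (k + 2) * rhoDS0 σa θ x) := by
        simp only [hexpand]
        rw [integral_const_mul, integral_sub (hmom (k + 4)) ((hmom (k + 2)).const_mul (1 - θ)),
          integral_const_mul]

theorem mDS_zero (hσa : σa ≠ 0) : mDS σa θ 0 = 1 := by
  simpa only [mDS, pow_zero, one_mul] using div_self (integral_rhoDS0_pos θ hσa).ne'

theorem mDS_add_four (hσa : σa ≠ 0) (k : ℕ) :
    mDS σa θ (k + 4) =
      (1 - θ) * mDS σa θ (k + 2) + 1 / 2 * (k + 1) * σa ^ 2 * mDS σa θ k := by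
  have hpos := integral_rhoDS0_pos θ hσa
  have hrec := integral_pow_mul_rhoDS0_recurrence θ hσa k
  simp only [mDS]
  field_simp at hrec ⊢
  linarith

end DawsonShiino

theorem stmt15_general (σa θ : ℝ) (hσa : σa ≠ 0) :
    mDS σa θ 0 = 1 ∧
    ∀ k : ℕ, 4 ≤ k → mDS σa θ k =
      (1 - θ) * mDS σa θ (k - 2) + (1 / 2) * ((k : ℝ) - 3) * σa ^ 2 * mDS σa θ (k - 4) := by
  refine ⟨mDS_zero θ hσa, fun k hk => ?_⟩
  obtain ⟨j, rfl⟩ := Nat.exists_eq_add_of_le' hk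
  have hj : ((j + 4 : ℕ) : ℝ) - 3 = j + 1 := by push_cast; ring
  rw [hj]
  exact mDS_add_four θ hσa j

/-- The even moments of the symmetric Dawson–Shiino stationary measure satisfy
the hierarchy m_{2p} = (1−θ)·m_{2p−2} + (1/2)·(2p−3)·σa²·m_{2p−4} for p ≥ 2 (with m₀ = 1). -/
theorem stmt15 (σa θ : ℝ) (hσa : 0 < σa) (hθ : 0 < θ) (p : ℕ) (hp : 2 ≤ p) :
    mDS σa θ 0 = 1 ∧
    mDS σa θ (2 * p) =
      (1 - θ) * mDS σa θ (2 * p - 2) +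
        (1 / 2) * (2 * (p : ℝ) - 3) * σa ^ 2 * mDS σa θ (2 * p - 4) := by
  obtain ⟨hzero, hrec⟩ := stmt15_general σa θ hσa.ne'
  exact ⟨hzero, mod_cast hrec (2 * p) (by lia)⟩
end
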